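/- Fix integers d ≥ 1, n ≥ 2 and dimensions u > v_0 > v_1 > ⋯ > v_{d−1} > 0. Let R be the set of representations (e, A_p, f_q, B_{p,q}) of F_{d,n} with e and all A_p injective, and let the group G = ∏_{p=0}^{d−1} GL(v_p,ℂ) act on R by (g_0,…,g_{d−1})·(e, A_p, f_q, B_{p,q}) = (e∘g_0^{−1}, g_{p−1}∘A_p∘g_p^{−1}, g_0∘f_q, g_p∘B_{p,q}∘g_{p−1}^{−1}). Then the map sending a representation to (E_0,…,E_{d−1}, φ_1,…,φ_{n−1}), where E_p = Im(e∘A_1∘⋯∘A_p) and φ_q = e∘f_q ∈ End(ℂ^u), induces a bijection from the orbit space R/G onto the set of tuples (E_•, φ_•) in which E_{d−1} ⊆ ⋯ ⊆ E_0 ⊆ ℂ^u is a flag of subspaces with dim E_p = v_p and each φ_q ∈ End(ℂ^u) satisfies Im φ_q ⊆ E_0, φ_q(E_{p−1}) ⊆ E_p for p = 1,…,d−1, and φ_q(E_{d−1}) = 0. -/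

import Mathlib

noncomputable section

/-- Inclusion `Fin (d-1) → Fin d`, `p ↦ p`. -/
def idxLo {d : ℕ} (p : Fin (d - 1)) : Fin d := ⟨p.val, by have := p.isLt; omega⟩

/-- Inclusion `Fin (d-1) → Fin d`, `p ↦ p + 1`. -/
def idxHi {d : ℕ} (p : Fin (d - 1)) : Fin d := ⟨p.val + 1, by have := p.isLt; omega⟩

/-- A representation `(e, A_p, f_q, B_{p,q})` of `F_{d,n}` with `e` and all `A_p` injective.
Here `A p` is the paper's `A_{p+1}`, `f q` the paper's `f_{q+1}` and `B p q` the paper's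
`B_{p+1,q+1}`. -/
structure Rep5 (d n u : ℕ) (v : ℕ → ℕ) where
  e : (Fin (v 0) → ℂ) →ₗ[ℂ] (Fin u → ℂ)
  A : (p : Fin (d - 1)) → (Fin (v (p.val + 1)) → ℂ) →ₗ[ℂ] (Fin (v p.val) → ℂ)
  f : (q : Fin (n - 1)) → (Fin u → ℂ) →ₗ[ℂ] (Fin (v 0) → ℂ)
  B : (p : Fin (d - 1)) → (q : Fin (n - 1)) →
    (Fin (v p.val) → ℂ) →ₗ[ℂ] (Fin (v (p.val + 1)) → ℂ)
  rel1 : d = 1 → ∀ q, (f q).comp e = 0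
  rel2 : ∀ (hd : 2 ≤ d) (q : Fin (n - 1)),
    (A ⟨0, by omega⟩).comp (B ⟨0, by omega⟩ q) + (f q).comp e = 0
  rel3 : ∀ (p : ℕ) (hp : p + 2 < d) (q : Fin (n - 1)),
    (A ⟨p + 1, by omega⟩).comp (B ⟨p + 1, by omega⟩ q)
      = (B ⟨p, by omega⟩ q).comp (A ⟨p, by omega⟩)
  rel4 : ∀ (hd : 2 ≤ d) (q : Fin (n - 1)),
    (B ⟨d - 2, by omega⟩ q).comp (A ⟨d - 2, by omega⟩) = 0
  einj : Function.Injective e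
  Ainj : ∀ p, Function.Injective (A p)

/-- The orbit relation of the action of `G = ∏_{p=0}^{d−1} GL(v_p, ℂ)`:
`(g_p)·(e, A_p, f_q, B_{p,q}) = (e∘g₀⁻¹, g_{p−1}∘A_p∘g_p⁻¹, g₀∘f_q, g_p∘B_{p,q}∘g_{p−1}⁻¹)`. -/
def GRel5 (d n u : ℕ) (hd : 1 ≤ d) (v : ℕ → ℕ) (x y : Rep5 d n u v) : Prop :=
  ∃ g : (p : Fin d) → ((Fin (v p.val) → ℂ) ≃ₗ[ℂ] (Fin (v p.val) → ℂ)),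
    y.e = x.e.comp (g ⟨0, hd⟩).symm.toLinearMap ∧
    (∀ p, y.A p = (g (idxLo p)).toLinearMap.comp
      ((x.A p).comp (g (idxHi p)).symm.toLinearMap)) ∧
    (∀ q, y.f q = (g ⟨0, hd⟩).toLinearMap.comp (x.f q)) ∧
    (∀ p q, y.B p q = (g (idxHi p)).toLinearMap.comp
      ((x.B p q).comp (g (idxLo p)).symm.toLinearMap))

/-- `chain5 x p = e ∘ A₁ ∘ ⋯ ∘ A_p : ℂ^{v_p} → ℂ^u` (junk `0` beyond the relevant range). -/
def chain5 (d n u : ℕ) (v : ℕ → ℕ) (x : Rep5 d n u v) :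
    (p : ℕ) → (Fin (v p) → ℂ) →ₗ[ℂ] (Fin u → ℂ)
  | 0 => x.e
  | p + 1 => if h : p < d - 1 then (chain5 d n u v x p).comp (x.A ⟨p, h⟩) else 0

/-- Nakajima's description of the total space of `T^∨Fl(v,u)^{⊕(n−1)}`: tuples
`(E₀,…,E_{d−1}, φ₁,…,φ_{n−1})` where `E_•` is a flag of subspaces of `ℂ^u` with
`dim E_p = v_p` and each `φ_q ∈ End(ℂ^u)` satisfies `Im φ_q ⊆ E₀`,
`φ_q(E_{p−1}) ⊆ E_p` and `φ_q(E_{d−1}) = 0`. -/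
def FlagPhi (d n u : ℕ) (hd : 1 ≤ d) (v : ℕ → ℕ) : Type :=
  {EΦ : (Fin d → Submodule ℂ (Fin u → ℂ)) ×
      (Fin (n - 1) → (Fin u → ℂ) →ₗ[ℂ] (Fin u → ℂ)) //
    (∀ p, Module.finrank ℂ (EΦ.1 p) = v p.val) ∧
    (∀ p : Fin (d - 1), EΦ.1 (idxHi p) ≤ EΦ.1 (idxLo p)) ∧
    (∀ q y, EΦ.2 q y ∈ EΦ.1 ⟨0, hd⟩) ∧
    (∀ (q : Fin (n - 1)) (p : Fin (d - 1)), ∀ x ∈ EΦ.1 (idxLo p), EΦ.2 q x ∈ EΦ.1 (idxHi p)) ∧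
    (∀ q : Fin (n - 1), ∀ x ∈ EΦ.1 ⟨d - 1, by omega⟩, EΦ.2 q x = 0)}

/-! A representation gives injective frames `c_p = e ∘ A₁ ∘ ⋯ ∘ A_p` of the subspaces `E_p` and
endomorphisms `φ_q = e ∘ f_q`. Conversely, since the frames are injective, the equations
`c_{p-1} ∘ A_p = c_p`, `c_0 ∘ f_q = φ_q` and `c_p ∘ B_{p,q} = -φ_q ∘ c_{p-1}` recover every map of
the representation from `c` and `φ`, and the relations of `F_{d,n}` amount to the last equation
together with `φ_q ∘ c_{d-1} = 0`. The group acts by changing the frames, and two frames differ by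
an automorphism of the source precisely when they have the same range. -/

theorem range_eq_range_iff_exists_linearEquiv {R M N P : Type*} [Semiring R]
    [AddCommMonoid M] [Module R M] [AddCommMonoid N] [Module R N] [AddCommMonoid P] [Module R P]
    {c : M →ₗ[R] P} {c' : N →ₗ[R] P} (hc : Function.Injective c) (hc' : Function.Injective c') :
    LinearMap.range c = LinearMap.range c' ↔ ∃ g : M ≃ₗ[R] N, c' ∘ₗ g.toLinearMap = c := by
  constructor
  · intro h
    refine ⟨LinearEquiv.ofInjective c hc ≪≫ₗ LinearEquiv.ofEq _ _ h ≪≫ₗ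
      (LinearEquiv.ofInjective c' hc').symm, LinearMap.ext fun w => ?_⟩
    exact congrArg Subtype.val (LinearEquiv.apply_symm_apply (LinearEquiv.ofInjective c' hc') _)
  · rintro ⟨g, rfl⟩
    exact LinearEquiv.range_comp g c'

namespace Rep5

variable {d n u : ℕ} {v : ℕ → ℕ}

/-- The map `e ∘ A₁ ∘ ⋯ ∘ A_p` of `chain5`, seen for `p < d` as a frame of its range `E_p`. -/
def frame (x : Rep5 d n u v) (p : ℕ) : (Fin (v p) → ℂ) →ₗ[ℂ] (Fin u → ℂ) :=
  chain5 d n u v x p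

/-- The endomorphism `φ_q = e ∘ f_q` of `ℂ^u`. -/
def endo (x : Rep5 d n u v) (q : Fin (n - 1)) : (Fin u → ℂ) →ₗ[ℂ] (Fin u → ℂ) :=
  x.e ∘ₗ x.f q

theorem frame_zero (x : Rep5 d n u v) : x.frame 0 = x.e := rfl

theorem frame_comp_A (x : Rep5 d n u v) (p : Fin (d - 1)) :
    x.frame p ∘ₗ x.A p = x.frame (p + 1) :=
  (dif_pos p.isLt : x.frame (p + 1) = _).symm

theorem frame_injective (x : Rep5 d n u v) {p : ℕ} (hp : p < d) :
    Function.Injective (x.frame p) := by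
  induction p with
  | zero => exact x.einj
  | succ p ih =>
    rw [← x.frame_comp_A ⟨p, by omega⟩]
    exact (ih (by omega)).comp (x.Ainj _)

theorem frame_comp_B (x : Rep5 d n u v) (p : Fin (d - 1)) (q : Fin (n - 1)) :
    x.frame (p + 1) ∘ₗ x.B p q = -(x.endo q ∘ₗ x.frame p) := by
  obtain ⟨p, hp⟩ := p
  induction p with
  | zero =>
    have h : x.A ⟨0, hp⟩ ∘ₗ x.B ⟨0, hp⟩ q = -(x.f q ∘ₗ x.e) :=
      eq_neg_of_add_eq_zero_left (x.rel2 (by omega) q)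
    rw [← frame_comp_A, LinearMap.comp_assoc, h, frame_zero, LinearMap.comp_neg, endo,
      LinearMap.comp_assoc]
  | succ p ih =>
    rw [← frame_comp_A, LinearMap.comp_assoc, x.rel3 p (by omega), ← LinearMap.comp_assoc,
      ih (by omega), LinearMap.neg_comp, LinearMap.comp_assoc, frame_comp_A]

theorem endo_comp_frame_last (x : Rep5 d n u v) (q : Fin (n - 1)) {p : ℕ} (hp : p + 1 = d) :
    x.endo q ∘ₗ x.frame p = 0 := by
  cases p with
  | zero => rw [endo, frame_zero, LinearMap.comp_assoc, x.rel1 hp.symm, LinearMap.comp_zero]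
  | succ p =>
    subst hp
    have h : x.B ⟨p, by omega⟩ q ∘ₗ x.A ⟨p, by omega⟩ = 0 := x.rel4 (by omega) q
    rw [← x.frame_comp_A ⟨p, by omega⟩, ← LinearMap.comp_assoc, ← neg_eq_zero,
      ← LinearMap.neg_comp, ← frame_comp_B, LinearMap.comp_assoc, h, LinearMap.comp_zero]

/-- The point of `T^∨Fl(v,u)^{⊕(n−1)}` defined by a representation. -/
def toFlagPhi (hd : 1 ≤ d) (x : Rep5 d n u v) : FlagPhi d n u hd v :=
  ⟨(fun p => LinearMap.range (x.frame p), x.endo), by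
    refine ⟨fun p => ?_, fun p => ?_, fun q y => ⟨x.f q y, rfl⟩, fun q p => ?_, fun q => ?_⟩
    · rw [LinearMap.finrank_range_of_inj (x.frame_injective p.isLt), Module.finrank_fin_fun]
    · change LinearMap.range (x.frame (p + 1)) ≤ LinearMap.range (x.frame p)
      rw [← frame_comp_A]
      exact LinearMap.range_comp_le_range _ _
    · rintro _ ⟨w, rfl⟩
      rw [← neg_mem_iff]
      exact ⟨x.B p q w, LinearMap.congr_fun (x.frame_comp_B p q) w⟩
    · rintro _ ⟨w, rfl⟩
      exact LinearMap.congr_fun (x.endo_comp_frame_last q (Nat.sub_add_cancel hd)) w⟩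

theorem toFlagPhi_eq_iff (hd : 1 ≤ d) {x y : Rep5 d n u v} :
    x.toFlagPhi hd = y.toFlagPhi hd ↔
      (∀ p : Fin d, LinearMap.range (x.frame p) = LinearMap.range (y.frame p)) ∧
        ∀ q, x.endo q = y.endo q := by
  rw [← funext_iff, ← funext_iff, ← Prod.mk_inj]
  exact Subtype.ext_iff

end Rep5

section Orbit

variable {d n u : ℕ} {hd : 1 ≤ d} {v : ℕ → ℕ} {x y : Rep5 d n u v}

/- Indexing the automorphisms by `ℕ` rather than `Fin d` keeps their types syntactically equal to
those of the maps they are composed with. -/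
theorem gRel5_iff_exists_intertwining :
    GRel5 d n u hd v x y ↔
      ∃ g : ∀ p : ℕ, p < d → ((Fin (v p) → ℂ) ≃ₗ[ℂ] (Fin (v p) → ℂ)),
        y.e ∘ₗ (g 0 hd).toLinearMap = x.e ∧
        (∀ p : Fin (d - 1),
          y.A p ∘ₗ (g (p + 1) (by omega)).toLinearMap =
            (g p (by omega)).toLinearMap ∘ₗ x.A p) ∧
        (∀ q, y.f q = (g 0 hd).toLinearMap ∘ₗ x.f q) ∧
        ∀ p q, y.B p q ∘ₗ (g p (by omega)).toLinearMap =
          (g (p + 1) (by omega)).toLinearMap ∘ₗ x.B p q := by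
  constructor
  · rintro ⟨g, he, hA, hf, hB⟩
    exact ⟨fun p hp => g ⟨p, hp⟩, (LinearEquiv.eq_comp_toLinearMap_symm _ _).mp he,
      fun p => (LinearEquiv.eq_comp_toLinearMap_symm _ _).mp (hA p), hf,
      fun p q => (LinearEquiv.eq_comp_toLinearMap_symm _ _).mp (hB p q)⟩
  · rintro ⟨g, he, hA, hf, hB⟩
    exact ⟨fun p => g p p.isLt, (LinearEquiv.eq_comp_toLinearMap_symm _ _).mpr he,
      fun p => (LinearEquiv.eq_comp_toLinearMap_symm _ _).mpr (hA p), hf,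
      fun p q => (LinearEquiv.eq_comp_toLinearMap_symm _ _).mpr (hB p q)⟩

theorem gRel5_iff_exists_frame_comp_eq :
    GRel5 d n u hd v x y ↔
      (∃ g : ∀ p : ℕ, p < d → ((Fin (v p) → ℂ) ≃ₗ[ℂ] (Fin (v p) → ℂ)),
        ∀ p hp, y.frame p ∘ₗ (g p hp).toLinearMap = x.frame p) ∧
        ∀ q, x.endo q = y.endo q := by
  rw [gRel5_iff_exists_intertwining]
  constructor
  · rintro ⟨g, he, hA, hf, -⟩
    refine ⟨⟨g, fun p => ?_⟩, fun q => ?_⟩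
    · induction p with
      | zero => exact fun _ => he
      | succ p ih =>
        intro hp
        rw [← y.frame_comp_A ⟨p, by omega⟩, LinearMap.comp_assoc, hA, ← LinearMap.comp_assoc,
          ih, x.frame_comp_A ⟨p, by omega⟩]
    · rw [Rep5.endo, Rep5.endo, hf, ← LinearMap.comp_assoc, he]
  · rintro ⟨⟨g, hg⟩, hendo⟩
    refine ⟨g, hg 0 hd, fun p => ?_, fun q => ?_, fun p q => ?_⟩
    · refine (LinearMap.cancel_left (y.frame_injective (p := p) (by omega))).mp ?_
      rw [← LinearMap.comp_assoc, y.frame_comp_A, hg, ← LinearMap.comp_assoc, hg, x.frame_comp_A]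
    · refine (LinearMap.cancel_left y.einj).mp ?_
      rw [← LinearMap.comp_assoc, ← y.frame_zero, hg]
      exact (hendo q).symm
    · refine (LinearMap.cancel_left (y.frame_injective (p := p + 1) (by omega))).mp ?_
      rw [← LinearMap.comp_assoc, y.frame_comp_B, LinearMap.neg_comp, LinearMap.comp_assoc, hg,
        ← LinearMap.comp_assoc, hg, x.frame_comp_B, hendo]

theorem gRel5_iff_toFlagPhi_eq :
    GRel5 d n u hd v x y ↔ x.toFlagPhi hd = y.toFlagPhi hd := by
  have hrange (p : Fin d) := range_eq_range_iff_exists_linearEquiv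
    (x.frame_injective p.isLt) (y.frame_injective p.isLt)
  simp only [Rep5.toFlagPhi_eq_iff, hrange, gRel5_iff_exists_frame_comp_eq]
  refine and_congr_left fun _ => ⟨fun ⟨g, hg⟩ p => ⟨g p p.isLt, hg p p.isLt⟩, fun h => ?_⟩
  choose g hg using h
  exact ⟨fun p hp => g ⟨p, hp⟩, fun p hp => hg ⟨p, hp⟩⟩

end Orbit

namespace FlagPhi

variable {d n u : ℕ} {hd : 1 ≤ d} {v : ℕ → ℕ} (T : FlagPhi d n u hd v)

/-- A chosen frame of the subspace `E_p`. -/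
def frame (p : ℕ) (hp : p < d) : (Fin (v p) → ℂ) →ₗ[ℂ] (Fin u → ℂ) :=
  (T.val.1 ⟨p, hp⟩).subtype ∘ₗ
    (Module.finBasisOfFinrankEq ℂ _ (T.property.1 ⟨p, hp⟩)).equivFun.symm.toLinearMap

variable {p : ℕ} (q : Fin (n - 1))

theorem frame_injective (hp : p < d) : Function.Injective (T.frame p hp) :=
  (T.val.1 ⟨p, hp⟩).injective_subtype.comp (LinearEquiv.injective _)

theorem range_frame (hp : p < d) : LinearMap.range (T.frame p hp) = T.val.1 ⟨p, hp⟩ :=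
  (LinearEquiv.range_comp _ _).trans (T.val.1 ⟨p, hp⟩).range_subtype

theorem frame_mem (hp : p < d) (w : Fin (v p) → ℂ) : T.frame p hp w ∈ T.val.1 ⟨p, hp⟩ :=
  SetLike.coe_mem _

/-- The inclusion `E_{p+1} ⊆ E_p` in the chosen frames. -/
def A (p : Fin (d - 1)) : (Fin (v (p.val + 1)) → ℂ) →ₗ[ℂ] (Fin (v p.val) → ℂ) :=
  LinearMap.codRestrictOfInjective (T.frame (p + 1) (by omega)) (T.frame p (by omega))
    (T.frame_injective _) fun w => by
      rw [range_frame]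
      exact T.property.2.1 p (T.frame_mem _ w)

/-- The map `φ_q : ℂ^u → E₀` in the chosen frame of `E₀`. -/
def f : (Fin u → ℂ) →ₗ[ℂ] (Fin (v 0) → ℂ) :=
  LinearMap.codRestrictOfInjective (T.val.2 q) (T.frame 0 hd) (T.frame_injective _) fun w => by
    rw [range_frame]
    exact T.property.2.2.1 q w

/-- The map `-φ_q : E_p → E_{p+1}` in the chosen frames. The sign comes from the relation
`A₁ ∘ B_{1,q} + f_q ∘ e = 0`. -/
def B (p : Fin (d - 1)) (q : Fin (n - 1)) :
    (Fin (v p.val) → ℂ) →ₗ[ℂ] (Fin (v (p.val + 1)) → ℂ) :=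
  LinearMap.codRestrictOfInjective (-(T.val.2 q ∘ₗ T.frame p (by omega)))
    (T.frame (p + 1) (by omega)) (T.frame_injective _) fun w => by
      rw [range_frame]
      exact neg_mem (T.property.2.2.2.1 q p _ (T.frame_mem _ w))

theorem frame_comp_A (p : Fin (d - 1)) :
    T.frame p (by omega) ∘ₗ T.A p = T.frame (p + 1) (by omega) :=
  LinearMap.codRestrictOfInjective_comp ..

theorem frame_comp_f : T.frame 0 hd ∘ₗ T.f q = T.val.2 q :=
  LinearMap.codRestrictOfInjective_comp ..

theorem frame_comp_B (p : Fin (d - 1)) :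
    T.frame (p + 1) (by omega) ∘ₗ T.B p q = -(T.val.2 q ∘ₗ T.frame p (by omega)) :=
  LinearMap.codRestrictOfInjective_comp ..

theorem comp_frame_last (hp : p + 1 = d) : T.val.2 q ∘ₗ T.frame p (by omega) = 0 := by
  subst hp
  exact LinearMap.ext fun w => T.property.2.2.2.2 q _ (T.frame_mem _ w)

theorem A_injective (p : Fin (d - 1)) : Function.Injective (T.A p) := by
  have h := T.frame_injective (p := p + 1) (by omega)
  rw [← frame_comp_A, LinearMap.coe_comp] at h
  exact h.of_comp

theorem f_comp_frame_zero (hd1 : d = 1) : T.f q ∘ₗ T.frame 0 hd = 0 := by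
  refine (LinearMap.cancel_left (T.frame_injective hd)).mp ?_
  rw [← LinearMap.comp_assoc, frame_comp_f, LinearMap.comp_zero, T.comp_frame_last q hd1.symm]

theorem A_comp_B_zero (hd2 : 2 ≤ d) :
    T.A ⟨0, by omega⟩ ∘ₗ T.B ⟨0, by omega⟩ q + T.f q ∘ₗ T.frame 0 hd = 0 := by
  refine (LinearMap.cancel_left (T.frame_injective hd)).mp ?_
  rw [LinearMap.comp_add, ← LinearMap.comp_assoc, T.frame_comp_A ⟨0, by omega⟩, frame_comp_B,
    ← LinearMap.comp_assoc, frame_comp_f, neg_add_cancel, LinearMap.comp_zero]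

theorem A_comp_B_succ (hp : p + 2 < d) :
    T.A ⟨p + 1, by omega⟩ ∘ₗ T.B ⟨p + 1, by omega⟩ q =
      T.B ⟨p, by omega⟩ q ∘ₗ T.A ⟨p, by omega⟩ := by
  have hp1 : p + 1 < d := by omega
  refine (LinearMap.cancel_left (T.frame_injective hp1)).mp ?_
  calc T.frame (p + 1) hp1 ∘ₗ (T.A ⟨p + 1, by omega⟩ ∘ₗ T.B ⟨p + 1, by omega⟩ q)
      = -(T.val.2 q ∘ₗ T.frame (p + 1) hp1) := by
        rw [← LinearMap.comp_assoc, T.frame_comp_A ⟨p + 1, by omega⟩, frame_comp_B]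
    _ = T.frame (p + 1) hp1 ∘ₗ (T.B ⟨p, by omega⟩ q ∘ₗ T.A ⟨p, by omega⟩) := by
        rw [← LinearMap.comp_assoc, T.frame_comp_B q ⟨p, by omega⟩, LinearMap.neg_comp,
          LinearMap.comp_assoc, frame_comp_A]

theorem B_comp_A_last (p : Fin (d - 1)) (hp : p + 2 = d) : T.B p q ∘ₗ T.A p = 0 := by
  refine (LinearMap.cancel_left (T.frame_injective (p := p + 1) (by omega))).mp ?_
  rw [← LinearMap.comp_assoc, frame_comp_B, LinearMap.neg_comp, LinearMap.comp_assoc,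
    frame_comp_A, T.comp_frame_last q hp, neg_zero, LinearMap.comp_zero]

/-- The representation given by the maps of the flag and the endomorphisms in the chosen frames. -/
def toRep5 : Rep5 d n u v where
  e := T.frame 0 hd
  A := T.A
  f := T.f
  B := T.B
  rel1 hd1 q := T.f_comp_frame_zero q hd1
  rel2 hd2 q := T.A_comp_B_zero q hd2
  rel3 _ hp q := T.A_comp_B_succ q hp
  rel4 hd2 q := T.B_comp_A_last q _ (Nat.sub_add_cancel hd2)
  einj := T.frame_injective hd
  Ainj := T.A_injective

theorem frame_toRep5 (hp : p < d) : T.toRep5.frame p = T.frame p hp := by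
  induction p with
  | zero => rfl
  | succ p ih =>
    rw [← T.toRep5.frame_comp_A ⟨p, by omega⟩, ih (by omega)]
    exact T.frame_comp_A ⟨p, by omega⟩

theorem toFlagPhi_toRep5 : T.toRep5.toFlagPhi hd = T := by
  refine Subtype.ext (Prod.ext (funext fun p => ?_) (funext T.frame_comp_f))
  exact (congrArg LinearMap.range (T.frame_toRep5 p.isLt)).trans (T.range_frame p.isLt)

end FlagPhi

/-- The bijection induced by `Rep5.toFlagPhi` from the orbit space `R/G` onto
`T^∨Fl(v,u)^{⊕(n−1)}`. -/
def orbitEquiv {d n u : ℕ} (hd : 1 ≤ d) {v : ℕ → ℕ} :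
    Quot (GRel5 d n u hd v) ≃ FlagPhi d n u hd v where
  toFun := Quot.lift (Rep5.toFlagPhi hd) fun _ _ => gRel5_iff_toFlagPhi_eq.mp
  invFun T := Quot.mk _ T.toRep5
  left_inv := by
    rintro ⟨x⟩
    exact Quot.sound (gRel5_iff_toFlagPhi_eq.mpr (FlagPhi.toFlagPhi_toRep5 _))
  right_inv := FlagPhi.toFlagPhi_toRep5

theorem orbit_space_equiv_cotangent_flag_general (d n u : ℕ) (hd : 1 ≤ d) (_hn : 1 ≤ n)
    (v : ℕ → ℕ) :
    ∃ bij : Quot (GRel5 d n u hd v) ≃ FlagPhi d n u hd v,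
      ∀ x : Rep5 d n u v,
        (bij (Quot.mk _ x)).val
          = (fun p : Fin d => LinearMap.range (chain5 d n u v x p.val),
             fun q : Fin (n - 1) => x.e.comp (x.f q)) :=
  ⟨orbitEquiv hd, fun _ => rfl⟩

/-- Proposition 7.2 for `n ≥ 2`: the map sending a representation to
`(E₀,…,E_{d−1}, φ₁,…,φ_{n−1})`, with `E_p = Im(e∘A₁∘⋯∘A_p)` and `φ_q = e∘f_q`, induces a
bijection from the orbit space `R/G` onto the set of tuples `(E_•, φ_•)` described by
`FlagPhi`, i.e. onto `T^∨Fl(v,u)^{⊕(n−1)}`. -/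
theorem orbit_space_equiv_cotangent_flag (d n u : ℕ) (hd : 1 ≤ d) (hn : 2 ≤ n)
    (v : ℕ → ℕ) (hu : v 0 < u) (hv : ∀ p, p + 1 < d → v (p + 1) < v p)
    (hpos : 0 < v (d - 1)) :
    ∃ bij : Quot (GRel5 d n u hd v) ≃ FlagPhi d n u hd v,
      ∀ x : Rep5 d n u v,
        (bij (Quot.mk _ x)).val
          = (fun p : Fin d => LinearMap.range (chain5 d n u v x p.val),
             fun q : Fin (n - 1) => x.e.comp (x.f q)) := by
  exact orbit_space_equiv_cotangent_flag_general d n u hd (one_le_two.trans hn) v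

end
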